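/- arXiv:1702.07104 — 7 statements merged into one kernel-verified Lean document; each statement's English description precedes it below -/
import Mathlib

section
/- The abelianization Ad(Q_W)_Ab of the adjoint group Ad(Q_W) is a free abelian group with basis {[e_s] : s ∈ R_W}, where [g] denotes the image of g in the abelianization. In particular, Ad(Q_W)_Ab is isomorphic to ℤ^{c(W)}. -/
open Quandles Rack CoxeterSystem

variable {B : Type} [Fintype B] {W : Type} [Group W] {M : CoxeterMatrix B}

/-- The Coxeter quandle `Q_W`: the set of reflections of `W`, with operation given by
conjugation. (Since reflections are involutions, `x ◃ y = x y x⁻¹ = x⁻¹ y x`.) -/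
def CoxeterQuandle (cs : CoxeterSystem M W) : Type := {w : W // cs.IsReflection w}

instance (cs : CoxeterSystem M W) : Quandle (CoxeterQuandle cs) where
  act x y := ⟨x.1 * y.1 * x.1⁻¹, y.2.conj x.1⟩
  self_distrib := by
    rintro ⟨x, _⟩ ⟨y, _⟩ ⟨z, _⟩
    apply Subtype.ext
    show x * (y * z * y⁻¹) * x⁻¹ = (x * y * x⁻¹) * (x * z * x⁻¹) * (x * y * x⁻¹)⁻¹
    group
  invAct x y := ⟨x.1⁻¹ * y.1 * x.1, by simpa using y.2.conj x.1⁻¹⟩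
  left_inv := by
    rintro ⟨x, _⟩ ⟨y, _⟩
    apply Subtype.ext
    show x⁻¹ * (x * y * x⁻¹) * x = y
    group
  right_inv := by
    rintro ⟨x, _⟩ ⟨y, _⟩
    apply Subtype.ext
    show x * (x⁻¹ * y * x) * x⁻¹ = y
    group
  fix := by
    rintro ⟨x, hx⟩
    apply Subtype.ext
    show x * x * x⁻¹ = x
    group

/-- The canonical generator `e_x` of the adjoint (enveloping) group `Ad(Q_W)` of the
Coxeter quandle, associated with the reflection `x`. -/
def coxE (cs : CoxeterSystem M W) (x : CoxeterQuandle cs) :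
    EnvelGroup (CoxeterQuandle cs) :=
  Rack.toEnvelGroup (CoxeterQuandle cs) x

theorem coxE_of_act (cs : CoxeterSystem M W) (x y : CoxeterQuandle cs) :
    Abelianization.of (coxE cs ⟨x.1 * y.1 * x.1⁻¹, y.2.conj x.1⟩) =
      Abelianization.of (coxE cs y) := by
  have h : coxE cs ⟨x.1 * y.1 * x.1⁻¹, y.2.conj x.1⟩ =
      coxE cs x * coxE cs y * (coxE cs x)⁻¹ :=
    (Rack.toEnvelGroup (CoxeterQuandle cs)).map_act' (x := x) (y := y)
  rw [h, map_mul, map_mul, map_inv, mul_comm, inv_mul_cancel_left]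

theorem coxE_of_conj (cs : CoxeterSystem M W) (w : W) :
    ∀ y : CoxeterQuandle cs,
    Abelianization.of (coxE cs ⟨w * y.1 * w⁻¹, y.2.conj w⟩) =
      Abelianization.of (coxE cs y) := by
  induction w using cs.simple_induction with
  | simple i =>
    intro y
    exact coxE_of_act cs ⟨cs.simple i, cs.isReflection_simple i⟩ y
  | one =>
    intro y
    congr 2
    apply Subtype.ext
    simp
  | mul w w' h h' =>
    intro y
    refine Eq.trans ?_ ((h ⟨w' * y.1 * w'⁻¹, y.2.conj w'⟩).trans (h' y))
    congr 2
    apply Subtype.ext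
    simp [mul_assoc]

theorem coxE_of_isConj (cs : CoxeterSystem M W) (x y : CoxeterQuandle cs)
    (h : IsConj x.1 y.1) :
    Abelianization.of (coxE cs x) = Abelianization.of (coxE cs y) := by
  obtain ⟨w, hw⟩ := isConj_iff.1 h
  rw [← coxE_of_conj cs w x]
  congr 2
  exact Subtype.ext hw

theorem envel_hom_ext (cs : CoxeterSystem M W) {G : Type} [Group G]
    (f g : EnvelGroup (CoxeterQuandle cs) →* G)
    (h : ∀ x, f (coxE cs x) = g (coxE cs x)) : f = g := by
  apply (Rack.toEnvelGroup.map (R := CoxeterQuandle cs) (G := G)).symm.injective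
  apply ShelfHom.ext
  funext x
  exact h x

theorem exists_envel_hom (cs : CoxeterSystem M W) {G : Type} [CommGroup G]
    (f : CoxeterQuandle cs → G) (hf : ∀ x y : CoxeterQuandle cs, IsConj x.1 y.1 → f x = f y) :
    ∃ F : EnvelGroup (CoxeterQuandle cs) →* G, ∀ x, F (coxE cs x) = f x := by
  let f' : CoxeterQuandle cs →◃ Quandle.Conj G :=
    { toFun := f
      map_act' := by
        intro x y
        have h1 : f (x ◃ y) = f y :=
          (hf _ _ (isConj_iff.2 ⟨x.1, rfl⟩)).symm
        have h2 : f x * f y * (f x)⁻¹ = f y := by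
          rw [mul_comm, inv_mul_cancel_left]
        exact h1.trans h2.symm }
  exact ⟨Rack.toEnvelGroup.map f', fun x => rfl⟩

/-- Let `R_W ⊆ S` be a complete set of representatives of the `W`-conjugacy classes of
reflections. Then the abelianization of `Ad(Q_W)` is a free abelian group with basis
`{[e_s] : s ∈ R_W}`; in particular it is isomorphic to `ℤ^{c(W)}`. -/
theorem stmt_3 [DecidableEq B] (cs : CoxeterSystem M W) (R : Finset B)
    (hR : ∀ t : W, cs.IsReflection t → ∃! s : R, IsConj (cs.simple s) t) :
    ∃ e : Abelianization (EnvelGroup (CoxeterQuandle cs)) ≃* Multiplicative (R → ℤ),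
      ∀ s : R, e (Abelianization.of (coxE cs ⟨cs.simple s, cs.isReflection_simple s⟩)) =
        Multiplicative.ofAdd (Pi.single s 1) := by
  classical
  choose rep hrep huniq using hR
  obtain ⟨F, hF⟩ := exists_envel_hom cs
    (fun x => Multiplicative.ofAdd (Pi.single (rep x.1 x.2) (1 : ℤ) : R → ℤ)) (by
      intro x y h
      have : rep x.1 x.2 = rep y.1 y.2 := huniq _ _ _ ((hrep x.1 x.2).trans h)
      simp only [this])
  let a : R → Abelianization (EnvelGroup (CoxeterQuandle cs)) := fun s =>
    Abelianization.of (coxE cs ⟨cs.simple s, cs.isReflection_simple s⟩)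
  let G : Multiplicative (R → ℤ) →* Abelianization (EnvelGroup (CoxeterQuandle cs)) :=
    { toFun := fun v => ∏ s, a s ^ (v.toAdd s)
      map_one' := by simp
      map_mul' := by
        intro v w
        simp [zpow_add, Finset.prod_mul_distrib] }
  have hG : ∀ s, G (Multiplicative.ofAdd (Pi.single s 1)) = a s := by
    intro s
    change ∏ t, a t ^ ((Pi.single s (1 : ℤ) : R → ℤ) t) = a s
    rw [Finset.prod_eq_single s]
    · simp
    · intro t _ ht
      simp [ht]
    · simp
  have hL : ∀ s : R, Abelianization.lift F (a s) = Multiplicative.ofAdd (Pi.single s 1) := by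
    intro s
    have : rep (cs.simple s) (cs.isReflection_simple s) = s :=
      (huniq _ _ s (IsConj.refl _)).symm
    simp only [a, Abelianization.lift_apply_of]
    exact (hF _).trans
      (congrArg (fun r : R => Multiplicative.ofAdd (Pi.single r (1 : ℤ) : R → ℤ)) this)
  refine ⟨MonoidHom.toMulEquiv (Abelianization.lift F) G ?_ ?_, hL⟩
  · apply Abelianization.hom_ext
    apply envel_hom_ext
    intro x
    simp only [MonoidHom.comp_apply, Abelianization.lift_apply_of, hF, hG, MonoidHom.id_apply]
    exact coxE_of_isConj cs _ _ (hrep x.1 x.2)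
  · refine MonoidHom.ext fun v => ?_
    change Abelianization.lift F (∏ s, a s ^ (v.toAdd s)) = v
    rw [map_prod]
    simp only [map_zpow, hL]
    apply Multiplicative.toAdd.injective
    rw [toAdd_prod]
    funext t
    simp [Finset.sum_apply, Pi.single_apply]
end

section
/- The kernel C_W of the canonical surjection φ : Ad(Q_W) → W, e_x ↦ x, is contained in the center of Ad(Q_W). -/
open Quandles Rack CoxeterSystem

variable {B : Type} [Fintype B] {W : Type} [Group W] {M : CoxeterMatrix B}

theorem envel_ind {R : Type} [Rack R] {P : EnvelGroup R → Prop} (h1 : P 1)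
    (hi : ∀ x, P (Rack.toEnvelGroup R x)) (hm : ∀ a b, P a → P b → P (a * b))
    (hv : ∀ a, P a → P a⁻¹) (g : EnvelGroup R) : P g := by
  refine Quotient.inductionOn g fun a => ?_
  induction a with
  | unit => exact h1
  | incl x => exact hi x
  | mul a b iha ihb => exact hm _ _ iha ihb
  | inv a iha => exact hv _ iha

theorem envel_conj (cs : CoxeterSystem M W)
    (φ : EnvelGroup (CoxeterQuandle cs) →* W)
    (hφ : ∀ x : CoxeterQuandle cs, φ (coxE cs x) = x.1)
    (g : EnvelGroup (CoxeterQuandle cs)) :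
    ∀ x y : CoxeterQuandle cs, y.1 = φ g * x.1 * (φ g)⁻¹ →
      g * coxE cs x * g⁻¹ = coxE cs y := by
  refine envel_ind (P := fun g => ∀ x y : CoxeterQuandle cs, y.1 = φ g * x.1 * (φ g)⁻¹ →
      g * coxE cs x * g⁻¹ = coxE cs y) ?_ ?_ ?_ ?_ g
  · intro x y h
    have : y = x := Subtype.ext (by simpa using h)
    subst this
    simp
  · intro z x y h
    have hz : φ (Rack.toEnvelGroup _ z) = z.1 := hφ z
    rw [hz] at h
    have : y = z ◃ x := Subtype.ext h
    subst this
    exact ((Rack.toEnvelGroup (CoxeterQuandle cs)).map_act (x := z) (y := x)).symm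
  · intro a b ha hb x y h
    have h2 := hb x ⟨φ b * x.1 * (φ b)⁻¹, x.2.conj _⟩ rfl
    have h3 := ha ⟨φ b * x.1 * (φ b)⁻¹, x.2.conj _⟩ y (by rw [h, map_mul]; group)
    rw [← h3, ← h2]
    group
  · intro a ha x y h
    have h2 := ha y x (by rw [h, map_inv]; group)
    rw [← h2]
    group

/-- The kernel `C_W` of the canonical surjection `φ : Ad(Q_W) → W`, `e_x ↦ x`, is contained
in the center of `Ad(Q_W)`. -/
theorem stmt_4 (cs : CoxeterSystem M W)
    (φ : EnvelGroup (CoxeterQuandle cs) →* W)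
    (hφ : ∀ x : CoxeterQuandle cs, φ (coxE cs x) = x.1) :
    φ.ker ≤ Subgroup.center (EnvelGroup (CoxeterQuandle cs)) := by
  intro g hg
  rw [MonoidHom.mem_ker] at hg
  rw [Subgroup.mem_center_iff]
  refine envel_ind ?_ ?_ ?_ ?_
  · simp
  · intro x
    have := envel_conj cs φ hφ g x x (by simp [hg])
    exact (mul_inv_eq_iff_eq_mul.mp this).symm
  · intro a b ha hb
    exact (Commute.mul_left (show Commute a g from ha) (show Commute b g from hb))
  · intro a ha
    exact (Commute.inv_left (show Commute a g from ha))
end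

section
/- The central subgroup C_W = ker φ of Ad(Q_W) is a free abelian group with basis {e_s² : s ∈ R_W}. In particular C_W ≅ ℤ^{c(W)}, so Ad(Q_W) is a central extension of W by the free abelian group ℤ^{c(W)}. -/
open Quandles Rack CoxeterSystem

variable {B : Type} [Fintype B] {W : Type} [Group W] {M : CoxeterMatrix B}

theorem coxE_induction (cs : CoxeterSystem M W) {p : EnvelGroup (CoxeterQuandle cs) → Prop}
    (g : EnvelGroup (CoxeterQuandle cs)) (hone : p 1) (hgen : ∀ x, p (coxE cs x))
    (hmul : ∀ a b, p a → p b → p (a * b)) (hinv : ∀ a, p a → p a⁻¹) : p g := by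
  refine Quotient.inductionOn g fun y => ?_
  induction y with
  | unit => exact hone
  | incl x => exact hgen x
  | mul a b iha ihb => exact hmul _ _ iha ihb
  | inv a iha => exact hinv _ iha

theorem coxE_act (cs : CoxeterSystem M W) (x y : CoxeterQuandle cs) :
    coxE cs (x ◃ y) = coxE cs x * coxE cs y * (coxE cs x)⁻¹ :=
  (Rack.toEnvelGroup (CoxeterQuandle cs)).map_act

theorem coxE_conj (cs : CoxeterSystem M W)
    (φ : EnvelGroup (CoxeterQuandle cs) →* W)
    (hφ : ∀ x : CoxeterQuandle cs, φ (coxE cs x) = x.1)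
    (g : EnvelGroup (CoxeterQuandle cs)) : ∀ (y z : CoxeterQuandle cs),
    z.1 = φ g * y.1 * (φ g)⁻¹ → g * coxE cs y * g⁻¹ = coxE cs z := by
  refine coxE_induction cs (p := fun g => ∀ (y z : CoxeterQuandle cs),
    z.1 = φ g * y.1 * (φ g)⁻¹ → g * coxE cs y * g⁻¹ = coxE cs z) g ?_ ?_ ?_ ?_
  · intro y z h
    have : z = y := Subtype.ext (by simpa using h)
    simp [this]
  · intro x y z h
    rw [← coxE_act]
    congr 1
    apply Subtype.ext
    rw [h, hφ]
    rfl
  · intro a b ha hb y z h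
    have h1 := hb y ⟨φ b * y.1 * (φ b)⁻¹, y.2.conj _⟩ rfl
    have h2 := ha ⟨φ b * y.1 * (φ b)⁻¹, y.2.conj _⟩ z (by rw [h, map_mul]; group)
    rw [← h2, ← h1]
    group
  · intro a ha y z h
    have h1 := ha z y (by rw [h, map_inv]; group)
    rw [← h1]
    group

theorem cox_pow_aux {H : Type*} [Group H] (a b : H) (ha : a * a = 1) (hb : b * b = 1) (m k : ℕ)
    (h : (m = 2 * k ∧ (a * b) ^ k * a = a * (a * b) ^ k) ∨
      (m = 2 * k + 1 ∧ (a * b) ^ k * a = b * (a * b) ^ k)) : (a * b) ^ m = 1 := by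
  have hai : a⁻¹ = a := inv_eq_of_mul_eq_one_left ha
  have hbi : b⁻¹ = b := inv_eq_of_mul_eq_one_left hb
  rcases h with ⟨rfl, h⟩ | ⟨rfl, h⟩
  · have h1 : (a * b) ^ k = ((a * b) ^ k)⁻¹ := by
      calc (a * b) ^ k = a * (a * b) ^ k * a⁻¹ := by rw [← h]; group
        _ = (a * (a * b) * a⁻¹) ^ k := conj_pow.symm
        _ = ((a * b)⁻¹) ^ k := by
          congr 1
          rw [mul_inv_rev, hai, hbi, ← mul_assoc, ha, one_mul]
        _ = _ := inv_pow _ _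
    rw [two_mul, pow_add]
    nth_rw 1 [h1]
    simp
  · have h1 : (a * b) ^ (k + 1) = ((a * b) ^ k)⁻¹ := by
      calc (a * b) ^ (k + 1) = (a * b) ^ k * a * b := by rw [pow_succ, mul_assoc]
        _ = b * (a * b) ^ k * b⁻¹ := by rw [h, hbi]
        _ = (b * (a * b) * b⁻¹) ^ k := conj_pow.symm
        _ = ((a * b)⁻¹) ^ k := by
          congr 1
          rw [mul_inv_rev, hai, hbi, mul_assoc, mul_assoc, hb, mul_one]
        _ = _ := inv_pow _ _
    have : 2 * k + 1 = (k + 1) + k := by ring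
    rw [this, pow_add, h1]
    simp

def coxS (cs : CoxeterSystem M W) (b : B) : CoxeterQuandle cs :=
  ⟨cs.simple b, cs.isReflection_simple b⟩

theorem coxS_val (cs : CoxeterSystem M W) (b : B) : (coxS cs b).1 = cs.simple b := rfl

theorem central_prod {G : Type*} [Group G] {ι : Type*} [Fintype ι] [DecidableEq ι] (z : ι → G)
    (hz : ∀ s, z s ∈ Subgroup.center G) :
    ∃ f : Multiplicative (ι → ℤ) →* G, (∀ s, f (Multiplicative.ofAdd (Pi.single s 1)) = z s) ∧
      (∀ K : Subgroup G, (∀ s, z s ∈ K) → f.range ≤ K) ∧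
      ∀ (h : G →* Multiplicative (ι → ℤ)) v, h (f v) = ∏ s, h (z s) ^ (v.toAdd s) := by
  letI : CommGroup (Subgroup.center G) :=
    { (inferInstance : Group (Subgroup.center G)) with
      mul_comm := fun a b => Subtype.ext (Subgroup.mem_center_iff.mp b.2 a.1) }
  let y : ι → Subgroup.center G := fun s => ⟨z s, hz s⟩
  let f0 : Multiplicative (ι → ℤ) →* Subgroup.center G :=
    { toFun := fun v => ∏ s, y s ^ (v.toAdd s)
      map_one' := by simp
      map_mul' := by
        intro v w
        simp [zpow_add, Finset.prod_mul_distrib] }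
  refine ⟨(Subgroup.center G).subtype.comp f0, ?_, ?_, ?_⟩
  · intro s
    have : f0 (Multiplicative.ofAdd (Pi.single s 1)) = y s := by
      show ∏ t, y t ^ ((Pi.single s 1 : ι → ℤ) t) = y s
      rw [Finset.prod_eq_single s]
      · simp
      · intro t _ ht
        simp [Pi.single_eq_of_ne ht]
      · simp
    rw [MonoidHom.comp_apply, this]
    rfl
  · rintro K hK _ ⟨v, rfl⟩
    show f0 v ∈ K.comap (Subgroup.center G).subtype
    exact Subgroup.prod_mem (K.comap (Subgroup.center G).subtype) fun s _ =>
      Subgroup.zpow_mem (K.comap (Subgroup.center G).subtype) (hK s) _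
  · intro h v
    show (h.comp (Subgroup.center G).subtype) (∏ s, y s ^ (v.toAdd s)) = _
    rw [map_prod]
    refine Finset.prod_congr rfl fun s _ => ?_
    rw [map_zpow]
    rfl

theorem cox_liftable (cs : CoxeterSystem M W)
    (φ : EnvelGroup (CoxeterQuandle cs) →* W)
    (hφ : ∀ x : CoxeterQuandle cs, φ (coxE cs x) = x.1)
    {H : Type*} [Group H] (π : EnvelGroup (CoxeterQuandle cs) →* H)
    (hπ : ∀ x, π (coxE cs x ^ 2) = 1) :
    M.IsLiftable (fun b => π (coxE cs (coxS cs b))) := by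
  intro i j
  have hsq : ∀ x, π (coxE cs x) * π (coxE cs x) = 1 := fun x => by
    rw [← map_mul, ← pow_two, hπ]
  have key : ∀ (k : ℕ) (l : B), (cs.simple i * cs.simple j) ^ k * cs.simple i =
      cs.simple l * (cs.simple i * cs.simple j) ^ k →
      (π (coxE cs (coxS cs i)) *
        π (coxE cs (coxS cs j))) ^ k *
        π (coxE cs (coxS cs i)) =
      π (coxE cs (coxS cs l)) *
      (π (coxE cs (coxS cs i)) *
        π (coxE cs (coxS cs j))) ^ k := by
    intro k l hk
    have := coxE_conj cs φ hφ ((coxE cs (coxS cs i) *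
      coxE cs (coxS cs j)) ^ k)
      (coxS cs i) (coxS cs l)
      (by simp only [map_pow, map_mul, hφ, coxS_val]; rw [hk]; group)
    rw [← this]
    simp only [map_pow, map_mul, map_inv]
    group
  have hm := cs.simple_mul_simple_pow i j
  -- conjugation of a power of the rotation by a simple reflection
  have hc : ∀ k : ℕ, (cs.simple i * (cs.simple i * cs.simple j) ^ k * (cs.simple i)⁻¹) =
      ((cs.simple i * cs.simple j) ^ k)⁻¹ := by
    intro k
    rw [← conj_pow, ← inv_pow]
    congr 1
    simp
  have hc' : ∀ k : ℕ, cs.simple i * (cs.simple i * cs.simple j) ^ k =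
      ((cs.simple i * cs.simple j) ^ k)⁻¹ * cs.simple i := by
    intro k
    rw [← hc]
    group
  rcases Nat.even_or_odd' (M i j) with ⟨k, hk | hk⟩
  · refine cox_pow_aux _ _ (hsq _) (hsq _) _ k (Or.inl ⟨hk, key k i ?_⟩)
    rw [hc']
    congr 1
    rw [hk, two_mul, pow_add] at hm
    exact eq_inv_of_mul_eq_one_left hm
  · refine cox_pow_aux _ _ (hsq _) (hsq _) _ k (Or.inr ⟨hk, key k j ?_⟩)
    have h2 : cs.simple j = cs.simple i * (cs.simple i * cs.simple j) := by simp
    have h3 : cs.simple j * (cs.simple i * cs.simple j) ^ k =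
        cs.simple i * (cs.simple i * cs.simple j) ^ (k + 1) := by
      rw [pow_succ', ← mul_assoc, ← h2]
    rw [h3, hc']
    congr 1
    rw [hk, two_mul, add_assoc, pow_add] at hm
    exact eq_inv_of_mul_eq_one_left hm

/-- The central subgroup `C_W = ker φ` of `Ad(Q_W)` is a free abelian group with basis
`{e_s² : s ∈ R_W}`; in particular `C_W ≅ ℤ^{c(W)}`, so `Ad(Q_W)` is a central extension
of `W` by the free abelian group `ℤ^{c(W)}`. -/
theorem stmt_6 [DecidableEq B] (cs : CoxeterSystem M W)
    (φ : EnvelGroup (CoxeterQuandle cs) →* W)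
    (hφ : ∀ x : CoxeterQuandle cs, φ (coxE cs x) = x.1)
    (R : Finset B)
    (hR : ∀ t : W, cs.IsReflection t → ∃! s : R, IsConj (cs.simple s) t) :
    Function.Surjective φ ∧
    φ.ker ≤ Subgroup.center (EnvelGroup (CoxeterQuandle cs)) ∧
    ∃ e : φ.ker ≃* Multiplicative (R → ℤ),
      ∀ (s : R)
        (h : (coxE cs ⟨cs.simple s, cs.isReflection_simple s⟩) ^ 2 ∈ φ.ker),
        e ⟨(coxE cs ⟨cs.simple s, cs.isReflection_simple s⟩) ^ 2, h⟩ =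
          Multiplicative.ofAdd (Pi.single s 1) := by
  classical
  have hsurj : Function.Surjective φ := by
    intro w
    refine cs.simple_induction (p := fun w => ∃ g, φ g = w) w (fun i => ⟨_, hφ (coxS cs i)⟩)
      ⟨1, map_one φ⟩ ?_
    rintro _ _ ⟨a, rfl⟩ ⟨b, rfl⟩
    exact ⟨a * b, map_mul φ a b⟩
  have hcen : φ.ker ≤ Subgroup.center (EnvelGroup (CoxeterQuandle cs)) := by
    intro z hz
    rw [MonoidHom.mem_ker] at hz
    rw [Subgroup.mem_center_iff]
    intro g
    refine coxE_induction cs (p := fun g => g * z = z * g) g (by simp) ?_ ?_ ?_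
    · intro x
      have := coxE_conj cs φ hφ z x x (by simp [hz])
      exact (mul_inv_eq_iff_eq_mul.mp this).symm
    · intro a b ha hb
      rw [mul_assoc, hb, ← mul_assoc, ha, mul_assoc]
    · intro a ha
      exact ((show Commute a z from ha).inv_left).eq
  refine ⟨hsurj, hcen, ?_⟩
  have hsqker : ∀ x, coxE cs x ^ 2 ∈ φ.ker := by
    intro x
    rw [MonoidHom.mem_ker, map_pow, hφ]
    exact x.2.pow_two
  let E : R → EnvelGroup (CoxeterQuandle cs) := fun s =>
    coxE cs (coxS cs s)
  obtain ⟨f, hfs, hfK, hfh⟩ := central_prod (fun s => E s ^ 2) (fun s => hcen (hsqker _))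
  -- the class map
  choose c hc hcu using fun x : CoxeterQuandle cs => hR x.1 x.2
  have hcact : ∀ x y : CoxeterQuandle cs, c (x ◃ y) = c y := by
    intro x y
    apply hcu y
    have h1 : IsConj (cs.simple (c (x ◃ y))) (x ◃ y).1 := hc _
    have h2 : IsConj y.1 (x ◃ y).1 := isConj_iff.mpr ⟨x.1, rfl⟩
    exact h1.trans h2.symm
  have hcs : ∀ s : R, c (coxS cs s) = s := fun s =>
    (hcu (coxS cs s) s (IsConj.refl _)).symm
  let hh : EnvelGroup (CoxeterQuandle cs) →* Multiplicative (R → ℤ) :=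
    Rack.toEnvelGroup.map
      { toFun := fun x => Multiplicative.ofAdd (Pi.single (c x) 1)
        map_act' := by
          intro x y
          rw [Quandle.conj_act_eq_conj, mul_inv_cancel_comm, hcact] }
  have hhE : ∀ x, hh (coxE cs x) = Multiplicative.ofAdd (Pi.single (c x) 1) := fun x => rfl
  have hhf : ∀ v, hh (f v) = v ^ 2 := by
    intro v
    rw [hfh]
    have h2 : ∀ s, hh (E s ^ 2) = Multiplicative.ofAdd (Pi.single s 1 : R → ℤ) ^ 2 := by
      intro s
      rw [map_pow, hhE, hcs]
    simp only [h2]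
    apply Multiplicative.toAdd.injective
    rw [toAdd_prod]
    funext t
    simp only [toAdd_zpow, toAdd_pow, toAdd_ofAdd, Finset.sum_apply, Pi.smul_apply]
    rw [Finset.sum_eq_single t]
    · simp [mul_comm]
    · intro s _ hs
      simp [Pi.single_eq_of_ne (Ne.symm hs)]
    · simp
  have hinj : Function.Injective f := by
    intro v w h
    have h1 : v ^ 2 = w ^ 2 := by rw [← hhf, ← hhf, h]
    apply Multiplicative.toAdd.injective
    funext t
    have h2 := congrFun (congrArg Multiplicative.toAdd h1) t
    simp only [toAdd_pow, Pi.smul_apply, smul_eq_mul, nsmul_eq_mul] at h2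
    push_cast at h2
    linarith
  have hfcen : f.range ≤ Subgroup.center (EnvelGroup (CoxeterQuandle cs)) := by
    exact hfK _ fun s => hcen (hsqker _)
  have hsqrange : ∀ x, coxE cs x ^ 2 ∈ f.range := by
    intro x
    obtain ⟨w, hw⟩ := isConj_iff.mp (hc x)
    obtain ⟨g, rfl⟩ := hsurj w
    have h1 := coxE_conj cs φ hφ g (coxS cs (c x)) x hw.symm
    refine ⟨Multiplicative.ofAdd (Pi.single (c x) 1), ?_⟩
    rw [hfs, ← h1, conj_pow]
    have h2 := Subgroup.mem_center_iff.mp (hcen (hsqker (coxS cs (c x)))) g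
    show E (c x) ^ 2 = g * E (c x) ^ 2 * g⁻¹
    exact (mul_inv_eq_iff_eq_mul.mpr h2).symm
  have hnormal : f.range.Normal := by
    refine ⟨fun n hn g => ?_⟩
    rw [Subgroup.mem_center_iff.mp (hfcen hn) g]
    simpa using hn
  have hlift := cox_liftable cs φ hφ (QuotientGroup.mk' f.range) (fun x =>
    (QuotientGroup.eq_one_iff _).mpr (hsqrange x))
  let ψ := cs.lift ⟨_, hlift⟩
  have hψs : ∀ i, ψ (cs.simple i) = QuotientGroup.mk' f.range
      (coxE cs (coxS cs i)) := fun i => cs.lift_apply_simple hlift i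
  have hψ : ∀ w, ∃ g, φ g = w ∧ ψ w = QuotientGroup.mk' f.range g := by
    intro w
    refine cs.simple_induction (p := fun w => ∃ g, φ g = w ∧ ψ w = QuotientGroup.mk' f.range g) w
      (fun i => ⟨_, hφ _, hψs i⟩) ⟨1, by simp, by rw [map_one, map_one]⟩ ?_
    rintro w w' ⟨a, rfl, ha⟩ ⟨b, rfl, hb⟩
    exact ⟨a * b, by simp, by rw [map_mul, map_mul, ha, hb]⟩
  have hψφ : ∀ g, ψ (φ g) = QuotientGroup.mk' f.range g := by
    intro g
    refine coxE_induction cs (p := fun g => ψ (φ g) = QuotientGroup.mk' f.range g) g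
      (by rw [map_one, map_one, map_one]) ?_ ?_ ?_
    · intro x
      obtain ⟨w, hw⟩ := isConj_iff.mp (hc x)
      obtain ⟨g, rfl, hg⟩ := hψ w
      have h1 := coxE_conj cs φ hφ g (coxS cs (c x)) x hw.symm
      rw [hφ, ← h1, ← hw, map_mul, map_mul, map_inv, hg, hψs, map_mul, map_mul, map_inv]
    · intro a b ha hb
      rw [map_mul, map_mul, ha, hb, map_mul]
    · intro a ha
      rw [map_inv, map_inv, ha, map_inv]
  have hrange : f.range = φ.ker := by
    apply le_antisymm
    · exact hfK _ fun s => hsqker _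
    · intro g hg
      have h1 := hψφ g
      rw [MonoidHom.mem_ker.mp hg, map_one] at h1
      exact (QuotientGroup.eq_one_iff _).mp h1.symm
  refine ⟨((MonoidHom.ofInjective hinj).trans (MulEquiv.subgroupCongr hrange)).symm, ?_⟩
  intro s h
  rw [MulEquiv.symm_apply_eq]
  apply Subtype.ext
  exact (hfs s).symm
end

section
/- The assignment a_s ↦ e_s (s ∈ S) yields a well-defined surjective group homomorphism ψ : A_W → Ad(Q_W) from the Artin group A_W onto the adjoint group of the Coxeter quandle, and the canonical surjection π : A_W → W factors as φ ∘ ψ, where φ : Ad(Q_W) → W is the map e_x ↦ x. -/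
open Quandles Rack CoxeterSystem

variable {B : Type} [Fintype B] {W : Type} [Group W] {M : CoxeterMatrix B}

/-- The alternating product `(gh)_m = ghgh⋯` with `m` factors. -/
def altProd {G : Type*} [One G] [Mul G] (g h : G) : ℕ → G
  | 0 => 1
  | n + 1 => g * altProd h g n

/-- The braid relations defining the Artin group of the Coxeter matrix `M`. -/
def artinRels (M : CoxeterMatrix B) : Set (FreeGroup B) :=
  {r | ∃ s t : B, s ≠ t ∧ M s t ≠ 0 ∧
    r = altProd (FreeGroup.of s) (FreeGroup.of t) (M s t) *
        (altProd (FreeGroup.of t) (FreeGroup.of s) (M s t))⁻¹}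

/-- The Artin group `A_W` associated with the Coxeter matrix `M`, presented by generators
`a_s (s ∈ S)` and relations `(a_s a_t)_{m(s,t)} = (a_t a_s)_{m(s,t)}` for `s ≠ t` with
`m(s,t) < ∞` (the entry `0` of a Coxeter matrix encodes `m(s,t) = ∞`). -/
abbrev ArtinGroup (M : CoxeterMatrix B) : Type := PresentedGroup (artinRels M)

theorem coxE_conj_s9 (cs : CoxeterSystem M W) (x y : CoxeterQuandle cs) :
    coxE cs x * coxE cs y = coxE cs (x ◃ y) * coxE cs x := by
  have h : coxE cs (x ◃ y) = coxE cs x * coxE cs y * (coxE cs x)⁻¹ :=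
    (Rack.toEnvelGroup (CoxeterQuandle cs)).map_act
  rw [h]; group

theorem altProd_coxE (cs : CoxeterSystem M W) (n : ℕ) : ∀ (x y r : CoxeterQuandle cs),
    r.1 * altProd x.1 y.1 n = altProd x.1 y.1 (n + 1) →
    altProd (coxE cs x) (coxE cs y) (n + 1) = coxE cs r * altProd (coxE cs x) (coxE cs y) n := by
  induction n with
  | zero =>
    intro x y r h
    have : r = x := Subtype.ext (by simpa [altProd] using h)
    subst this
    simp [altProd]
  | succ n ih =>
    intro x y r h
    have h2 := ih y x (x ◃⁻¹ r) (by
      show x.1⁻¹ * r.1 * x.1 * _ = _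
      have h' : r.1 * (x.1 * altProd y.1 x.1 n) = x.1 * altProd y.1 x.1 (n + 1) := h
      rw [mul_assoc, mul_assoc, h']; group)
    calc altProd (coxE cs x) (coxE cs y) (n + 2)
        = coxE cs x * altProd (coxE cs y) (coxE cs x) (n + 1) := rfl
      _ = coxE cs r * (coxE cs x * altProd (coxE cs y) (coxE cs x) n) := by
        rw [h2, ← mul_assoc, coxE_conj_s9, Rack.act_invAct_eq, mul_assoc]

theorem altProd_invol {G : Type*} [Group G] (n : ℕ) : ∀ (s t : G), s * s = 1 → t * t = 1 →
    altProd s t n = (s * t) ^ n * altProd t s n := by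
  induction n with
  | zero => intros; simp [altProd]
  | succ n ih =>
    intro s t hs ht
    have e : s * (t * s) ^ n = (s * t) ^ n * s := by
      clear ih
      induction n with
      | zero => simp
      | succ n ih => rw [pow_succ, ← mul_assoc, ih, pow_succ]; group
    show s * altProd t s n = _ * (t * altProd s t n)
    rw [ih t s ht hs, ← mul_assoc, e, pow_succ]
    simp only [mul_assoc]
    rw [← mul_assoc t t, ht, one_mul]

theorem map_altProd' {G H : Type*} [Group G] [Group H] (f : G →* H) (n : ℕ) : ∀ (s t : G),
    f (altProd s t n) = altProd (f s) (f t) n := by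
  induction n with
  | zero => intros; simp [altProd]
  | succ n ih => intro s t; simp [altProd, ih]

theorem coxE_braid (cs : CoxeterSystem M W) (x y : CoxeterQuandle cs) (m : ℕ)
    (h : altProd x.1 y.1 m = altProd y.1 x.1 m) :
    altProd (coxE cs x) (coxE cs y) m = altProd (coxE cs y) (coxE cs x) m := by
  cases m with
  | zero => rfl
  | succ n => exact altProd_coxE cs n x y y h.symm

theorem coxE_generate (cs : CoxeterSystem M W) (H : Subgroup (EnvelGroup (CoxeterQuandle cs)))
    (h : ∀ x, coxE cs x ∈ H) (g : EnvelGroup (CoxeterQuandle cs)) : g ∈ H := by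
  refine Quotient.inductionOn g ?_
  intro a
  induction a with
  | unit => exact H.one_mem
  | incl x => exact h x
  | mul a b iha ihb => exact H.mul_mem iha ihb
  | inv a iha => exact H.inv_mem iha

/-- The assignment `a_s ↦ e_s` yields a well-defined surjective group homomorphism
`ψ : A_W → Ad(Q_W)`, and the canonical surjection `π : A_W → W`, `a_s ↦ s`, factors as
`π = φ ∘ ψ`, where `φ : Ad(Q_W) → W` is the homomorphism determined by `e_x ↦ x`. -/
theorem stmt_9 (cs : CoxeterSystem M W) :
    ∃ ψ : ArtinGroup M →* EnvelGroup (CoxeterQuandle cs),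
      (∀ s : B, ψ (PresentedGroup.of s) =
        coxE cs ⟨cs.simple s, cs.isReflection_simple s⟩) ∧
      Function.Surjective ψ ∧
      ∀ π : ArtinGroup M →* W, (∀ s : B, π (PresentedGroup.of s) = cs.simple s) →
        ∀ φ : EnvelGroup (CoxeterQuandle cs) →* W,
          (∀ x : CoxeterQuandle cs, φ (coxE cs x) = x.1) →
          π = φ.comp ψ := by
  have hrel : ∀ r ∈ artinRels M, FreeGroup.lift
      (fun s : B => coxE cs ⟨cs.simple s, cs.isReflection_simple s⟩) r = 1 := by
    rintro r ⟨s, t, -, -, rfl⟩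
    rw [map_mul, map_inv, mul_inv_eq_one, map_altProd', map_altProd',
      FreeGroup.lift_apply_of, FreeGroup.lift_apply_of]
    apply coxE_braid
    show altProd (cs.simple s) (cs.simple t) _ = altProd (cs.simple t) (cs.simple s) _
    rw [altProd_invol _ _ _ (cs.simple_mul_simple_self s) (cs.simple_mul_simple_self t),
      cs.simple_mul_simple_pow, one_mul]
  have hof : ∀ s : B, PresentedGroup.toGroup hrel (PresentedGroup.of s) =
      coxE cs ⟨cs.simple s, cs.isReflection_simple s⟩ := fun s => PresentedGroup.toGroup.of hrel
  refine ⟨PresentedGroup.toGroup hrel, hof, ?_, ?_⟩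
  · intro g
    refine coxE_generate cs (PresentedGroup.toGroup hrel).range ?_ g
    rintro ⟨x, w, i, rfl⟩
    induction w using cs.simple_induction_left with
    | one =>
      refine ⟨PresentedGroup.of i, (hof i).trans ?_⟩
      congr 1
      exact Subtype.ext (by simp)
    | mul_simple_left w j ih =>
      have hj : coxE cs ⟨cs.simple j, cs.isReflection_simple j⟩ ∈
        (PresentedGroup.toGroup hrel).range := ⟨_, hof j⟩
      have key := coxE_conj_s9 cs ⟨cs.simple j, cs.isReflection_simple j⟩
        ⟨w * cs.simple i * w⁻¹, w, i, rfl⟩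
      rw [← mul_inv_eq_iff_eq_mul] at key
      have e : (⟨cs.simple j * w * cs.simple i * (cs.simple j * w)⁻¹, cs.simple j * w, i, rfl⟩ :
          CoxeterQuandle cs) = Shelf.act (α := CoxeterQuandle cs)
            ⟨cs.simple j, cs.isReflection_simple j⟩ ⟨w * cs.simple i * w⁻¹, w, i, rfl⟩ := by
        apply Subtype.ext
        show _ = cs.simple j * (w * cs.simple i * w⁻¹) * (cs.simple j)⁻¹
        group
      rw [e, ← key]
      exact Subgroup.mul_mem _ (Subgroup.mul_mem _ hj ih) (Subgroup.inv_mem _ hj)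
  · intro π hπ φ hφ
    apply PresentedGroup.ext
    intro s
    rw [hπ, MonoidHom.comp_apply, hof]
    exact (hφ ⟨cs.simple s, cs.isReflection_simple s⟩).symm
end

section
/- The central extension 1 → C_W → Ad(Q_W) → W → 1 is nontrivial; in fact there is no group isomorphism between Ad(Q_W) and the direct product C_W × W (equivalently, Ad(Q_W) is not isomorphic to ℤ^{c(W)} × W). -/
open Quandles Rack CoxeterSystem

variable {B : Type} [Fintype B] {W : Type} [Group W] {M : CoxeterMatrix B}

theorem aux_torsion {R : Type} [Rack R]
    (χ : EnvelGroup R →* Multiplicative (ZMod 2)) (g : EnvelGroup R) (hg : g * g = 1) :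
    χ g = 1 := by
  let l : R → Multiplicative ℤ := fun x =>
    Multiplicative.ofAdd (((Multiplicative.toAdd (χ (toEnvelGroup R x))).val : ℕ) : ℤ)
  let h : R →◃ Quandle.Conj (Multiplicative ℤ) :=
    { toFun := l
      map_act' := by
        intro x y
        have h1 : χ (toEnvelGroup R (x ◃ y)) = χ (toEnvelGroup R y) := by
          have h2 : (toEnvelGroup R (x ◃ y) : EnvelGroup R) =
              (toEnvelGroup R x : EnvelGroup R) * (toEnvelGroup R y : EnvelGroup R) *
                (toEnvelGroup R x : EnvelGroup R)⁻¹ := (toEnvelGroup R).map_act' 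
          rw [h2]
          refine (map_mul χ _ _).trans ?_
          rw [map_mul, map_inv, mul_comm, inv_mul_cancel_left]
        have h3 : l (x ◃ y) = l y := by
          simp only [l]
          rw [h1]
        rw [h3]
        change l y = l x * l y * (l x)⁻¹
        rw [mul_comm, inv_mul_cancel_left] }
  let ψ : EnvelGroup R →* Multiplicative ℤ := toEnvelGroup.map h
  let r : Multiplicative ℤ →* Multiplicative (ZMod 2) :=
    AddMonoidHom.toMultiplicative (Int.castAddHom (ZMod 2))
  have key : r.comp ψ = χ := by
    apply toEnvelGroup.map.symm.injective
    ext x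
    change r (ψ (toEnvelGroup R x)) = χ (toEnvelGroup R x)
    have : ψ (toEnvelGroup R x) = l x := 
      (congrArg (fun f => f x) (toEnvelGroup.univ R _ h)).symm.trans rfl
    rw [this]
    simp only [l, r]
    apply Multiplicative.toAdd.injective
    simp
  have h0 : ψ g * ψ g = 1 := by rw [← map_mul, hg, map_one]
  have h1 : ψ g = 1 := by
    have : Multiplicative.toAdd (ψ g) + Multiplicative.toAdd (ψ g) = 0 := h0
    apply Multiplicative.toAdd.injective
    change Multiplicative.toAdd (ψ g) = 0
    omega
  rw [← key, MonoidHom.comp_apply, h1, map_one]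

theorem aux_main [Nonempty B] (cs : CoxeterSystem M W) (A : Type) [Group A] :
    IsEmpty (EnvelGroup (CoxeterQuandle cs) ≃* (A × W)) := by
  refine ⟨fun f => ?_⟩
  obtain ⟨i⟩ := ‹Nonempty B›
  have h := aux_torsion ((cs.lengthParity.comp (MonoidHom.snd A W)).comp f.toMonoidHom)
    (f.symm (1, cs.simple i)) (by rw [← map_mul]; simp)
  simp [cs.lengthParity_simple] at h

/-- The central extension `1 → C_W → Ad(Q_W) → W → 1` is nontrivial: there is no group
isomorphism between `Ad(Q_W)` and the direct product `C_W × W`; equivalently, `Ad(Q_W)` is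
not isomorphic to `ℤ^{c(W)} × W`, where `c(W)` is the number of conjugacy classes of
reflections. -/
theorem stmt_12 [Nonempty B] (cs : CoxeterSystem M W)
    (φ : EnvelGroup (CoxeterQuandle cs) →* W)
    (hφ : ∀ x : CoxeterQuandle cs, φ (coxE cs x) = x.1) :
    IsEmpty (EnvelGroup (CoxeterQuandle cs) ≃* (φ.ker × W)) ∧
    IsEmpty (EnvelGroup (CoxeterQuandle cs) ≃*
      (Multiplicative
        ({c : ConjClasses W // ∃ t : W, cs.IsReflection t ∧ ConjClasses.mk t = c} → ℤ)
        × W)) := by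
  exact ⟨aux_main cs _, aux_main cs _⟩
end

section
/- If all reflections of W are conjugate in W (that is, c(W) = 1), then the second group cohomology H²(W, ℤ) of W with trivial coefficients in ℤ is isomorphic to ℤ/2. -/
/-- The central extension attached to a 2-cocycle. -/
@[ext] structure CExt {W : Type} (f : W → W → ℤ) where
  /-- central part -/
  a : ℤ
  /-- quotient part -/
  g : W

namespace CExt

variable {W : Type} [Group W] {f : W → W → ℤ}

/-- cocycle condition -/
def IsC (f : W → W → ℤ) : Prop :=
  ∀ g h j, f (g * h) j + f g h = f h j + f g (h * j)

theorem IsC.one_left (hf : IsC f) (g : W) : f 1 g = f 1 1 := by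
  have := hf 1 1 g
  simp at this; omega

theorem IsC.one_right (hf : IsC f) (g : W) : f g 1 = f 1 1 := by
  have := hf g 1 1
  simp at this; omega

/-- group structure -/
@[reducible] def grp (hf : IsC f) : Group (CExt f) :=
  letI : Mul (CExt f) := ⟨fun x y => ⟨x.a + y.a + f x.g y.g, x.g * y.g⟩⟩
  letI : One (CExt f) := ⟨⟨- f 1 1, 1⟩⟩
  letI : Inv (CExt f) := ⟨fun x => ⟨-x.a - f x.g⁻¹ x.g - f 1 1, x.g⁻¹⟩⟩
  Group.ofLeftAxioms
    (by
      intro x y z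
      have := hf x.g y.g z.g
      apply CExt.ext
      · change (x.a + y.a + f x.g y.g) + z.a + f (x.g * y.g) z.g =
          x.a + (y.a + z.a + f y.g z.g) + f x.g (y.g * z.g)
        omega
      · exact mul_assoc _ _ _)
    (by
      intro x
      have := hf.one_left x.g
      apply CExt.ext
      · change - f 1 1 + x.a + f 1 x.g = x.a
        omega
      · exact one_mul _)
    (by
      intro x
      apply CExt.ext
      · change (-x.a - f x.g⁻¹ x.g - f 1 1) + x.a + f x.g⁻¹ x.g = - f 1 1
        omega
      · exact inv_mul_cancel _)

theorem key {B : Type} {M : CoxeterMatrix B} (cs : CoxeterSystem M W)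
    (h1 : ∀ t t' : W, cs.IsReflection t → cs.IsReflection t' → IsConj t t')
    (hf : IsC f) (i₀ : B) (he : Even (f (cs.simple i₀) (cs.simple i₀) + f 1 1)) :
    ∃ x : W → ℤ, ∀ g h, f g h = x h - x (g * h) + x g := by
  let _ := grp hf
  have mul_a : ∀ x y : CExt f, (x * y).a = x.a + y.a + f x.g y.g := fun _ _ => rfl
  have mul_g : ∀ x y : CExt f, (x * y).g = x.g * y.g := fun _ _ => rfl
  have one_a : (1 : CExt f).a = - f 1 1 := rfl
  have one_g : (1 : CExt f).g = 1 := rfl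
  have central : ∀ z x : CExt f, z.g = 1 → x * z = z * x := by
    intro z x hz
    apply CExt.ext
    · rw [mul_a, mul_a, hz, hf.one_left, hf.one_right]; ring
    · rw [mul_g, mul_g, hz]; simp
  let p : CExt f →* W := ⟨⟨CExt.g, rfl⟩, fun _ _ => rfl⟩
  have hp : ∀ x, p x = x.g := fun _ => rfl
  -- all squares are even
  have ev : ∀ i, Even (f (cs.simple i) (cs.simple i) + f 1 1) := by
    intro i
    obtain ⟨c, hc⟩ := isConj_iff.1 (h1 _ _ (cs.isReflection_simple i₀) (cs.isReflection_simple i))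
    let u : CExt f := ⟨0, c⟩
    let t : CExt f := ⟨0, cs.simple i₀⟩
    let r : CExt f := u * t * u⁻¹
    have hr : r.g = cs.simple i := by
      rw [← hc, ← hp]; simp only [r, map_mul, map_inv]; rfl
    have htt : (t * t).g = 1 := by rw [mul_g]; simp [t]
    have hrr : r * r = t * t := by
      have : r * r = u * (t * t) * u⁻¹ := by simp only [r]; group
      rw [this, central _ u htt]; group
    have := congrArg CExt.a hrr
    rw [mul_a r r, mul_a t t, hr] at this
    change _ = (0 : ℤ) + 0 + f (cs.simple i₀) (cs.simple i₀) at this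
    obtain ⟨k, hk⟩ := he
    exact ⟨k - r.a, by omega⟩
  choose k hk using ev
  let e : B → CExt f := fun i => ⟨- k i, cs.simple i⟩
  have hee : ∀ i, e i * e i = 1 := by
    intro i
    apply CExt.ext
    · rw [mul_a, one_a]; have := hk i; simp only [e]; omega
    · rw [mul_g, one_g]; simp [e]
  have lif : M.IsLiftable e := by
    intro i j
    set z := (e i * e j) ^ M i j with hz
    have zg : z.g = 1 := by
      rw [← hp, hz, map_pow, map_mul]
      exact cs.simple_mul_simple_pow i j
    have hi : ∀ i, (e i)⁻¹ = e i := fun i => inv_eq_of_mul_eq_one_left (hee i)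
    have c1 : e i * z * (e i)⁻¹ = z := by rw [central z _ zg]; group
    have c2 : e i * z * (e i)⁻¹ = z⁻¹ := by
      rw [hz, ← conj_pow, ← inv_pow, mul_inv_rev, hi, hi, ← mul_assoc, hee, one_mul]
    have zz : z * z = 1 := by
      have := c1.symm.trans c2
      nth_rw 1 [this]; simp
    have := congrArg CExt.a zz
    rw [mul_a, one_a, zg] at this
    apply CExt.ext
    · rw [one_a]; omega
    · rw [zg, one_g]
  let σ : W →* CExt f := cs.lift ⟨e, lif⟩
  have hσ : p.comp σ = MonoidHom.id W := by
    apply cs.ext_simple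
    intro i
    simp only [MonoidHom.comp_apply, σ, cs.lift_apply_simple lif]
    rfl
  have hσg : ∀ w, (σ w).g = w := fun w => DFunLike.congr_fun hσ w
  refine ⟨fun w => - (σ w).a, fun g h => ?_⟩
  have := congrArg CExt.a (map_mul σ g h)
  rw [mul_a, hσg, hσg] at this
  simp only
  omega

end CExt

theorem stmt_13 {B : Type} [Fintype B] [Nonempty B] {W : Type} [Group W]
    {M : CoxeterMatrix B} (cs : CoxeterSystem M W)
    (h1 : ∀ t t' : W, cs.IsReflection t → cs.IsReflection t' → IsConj t t') :
    Nonempty (groupCohomology.H2 (Rep.trivial ℤ W ℤ) ≃+ ZMod 2) := by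
  obtain ⟨i₀⟩ := ‹Nonempty B›
  let A := Rep.trivial ℤ W ℤ
  let s := cs.simple i₀
  let φ : groupCohomology.cocycles₂ A →+ ZMod 2 :=
    { toFun := fun f => (((f.1 (s, s) : ℤ) + (f.1 (1, 1) : ℤ) : ℤ) : ZMod 2)
      map_zero' := by
        change (((0 : ℤ) + (0 : ℤ) : ℤ) : ZMod 2) = 0
        simp
      map_add' := by
        intro f g
        have aux : ∀ a b c d : ℤ, (((a + b) + (c + d) : ℤ) : ZMod 2) =
            ((a + c : ℤ) : ZMod 2) + ((b + d : ℤ) : ZMod 2) := by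
          intros
          push_cast
          ring
        exact aux _ _ _ _ }
  have hφ : ∀ f, φ f = (((f.1 (s, s) : ℤ) + (f.1 (1, 1) : ℤ) : ℤ) : ZMod 2) := fun _ => rfl
  have surj : Function.Surjective φ := by
    let q : W → ZMod 2 := fun w => (cs.lengthParity w).toAdd
    have hq : ∀ g h, q (g * h) = q g + q h := fun g h => by simp [q]
    have dec : ∀ a b c : ZMod 2, ((a + b).val : ℤ) * c.val + a.val * b.val =
      b.val * c.val + a.val * (b + c).val := by decide
    let F : W × W → A := fun x => (((q x.1).val * (q x.2).val : ℤ) : ℤ)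
    have hF : F ∈ groupCohomology.cocycles₂ A := by
      rw [groupCohomology.mem_cocycles₂_iff]
      intro g h j
      have := dec (q g) (q h) (q j)
      rw [← hq, ← hq] at this
      exact this
    have h1' : φ ⟨F, hF⟩ = 1 := by
      rw [hφ]
      have e1 : q s = 1 := by simp [q, s, cs.lengthParity_simple]
      have e2 : q 1 = 0 := by simp [q]
      change ((((q s).val * (q s).val : ℤ) + ((q 1).val * (q 1).val : ℤ) : ℤ) : ZMod 2) = 1
      rw [e1, e2]; decide
    intro y
    have : y = 0 ∨ y = 1 := by revert y; decide
    rcases this with rfl | rfl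
    · exact ⟨0, map_zero φ⟩
    · exact ⟨_, h1'⟩
  let π : groupCohomology.cocycles₂ A →+ groupCohomology.H2 A :=
    (groupCohomology.H2π A).hom.toAddMonoidHom
  have hπ : Function.Surjective π := fun x =>
    groupCohomology.H2_induction_on (C := fun x => ∃ y, π y = x) x (fun y => ⟨y, rfl⟩)
  have hker : π.ker = φ.ker := by
    ext f
    rw [AddMonoidHom.mem_ker, AddMonoidHom.mem_ker]
    refine (groupCohomology.H2π_eq_zero_iff f).trans ?_
    rw [hφ, ZMod.intCast_zmod_eq_zero_iff_dvd]
    constructor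
    · rintro ⟨x, hx⟩
      have e : ∀ g h, (f.1 (g, h) : ℤ) = (x h : ℤ) - (x (g * h) : ℤ) + (x g : ℤ) :=
        fun g h => (congrFun hx (g, h)).symm
      rw [e, e]
      have : s * s = 1 := cs.simple_mul_simple_self i₀
      rw [this, mul_one]
      exact ⟨x s, by push_cast; ring⟩
    · intro hd
      obtain ⟨x, hx⟩ := CExt.key (f := fun g h => (f.1 (g, h) : ℤ)) cs h1
        (fun g h j => (groupCohomology.mem_cocycles₂_iff f.1).1 f.2 g h j) i₀
        (even_iff_two_dvd.2 hd)
      exact ⟨x, funext fun ⟨g, h⟩ => (hx g h).symm⟩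
  exact ⟨(QuotientAddGroup.quotientKerEquivOfSurjective π hπ).symm.trans
    ((QuotientAddGroup.quotientAddEquivOfEq hker).trans
      (QuotientAddGroup.quotientKerEquivOfSurjective φ surj))⟩
end

section
/- The function τ_ρ : W × W → ℤ defined by τ_ρ(w₁, w₂) = 1 if ℓ(w₁) and ℓ(w₂) are both odd, and τ_ρ(w₁, w₂) = 0 otherwise, is a normalized 2-cocycle of W with coefficients in the trivial W-module ℤ (i.e. τ_ρ(w₂,w₃) − τ_ρ(w₁w₂,w₃) + τ_ρ(w₁,w₂w₃) − τ_ρ(w₁,w₂) = 0 for all w₁,w₂,w₃ ∈ W, and τ_ρ(1,w) = τ_ρ(w,1) = 0). Moreover, if all reflections of W are conjugate (c(W) = 1), then the cohomology class of τ_ρ in H²(W, ℤ) is nonzero, i.e. τ_ρ is not a coboundary. -/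
/-- The function `τ_ρ(w₁, w₂) = 1` if `ℓ(w₁)` and `ℓ(w₂)` are both odd and `0` otherwise is
a normalized 2-cocycle of `W` with coefficients in the trivial `W`-module `ℤ`; moreover, if
all reflections of `W` are conjugate (`c(W) = 1`), then `τ_ρ` is not a coboundary, i.e. its
class in `H²(W, ℤ)` is nonzero. -/
theorem stmt_15 {B : Type} [Fintype B] [Nonempty B] {W : Type} [Group W]
    {M : CoxeterMatrix B} (cs : CoxeterSystem M W)
    (τ : W → W → ℤ)
    (hτ : ∀ w₁ w₂ : W, τ w₁ w₂ =
      if Odd (cs.length w₁) ∧ Odd (cs.length w₂) then 1 else 0) :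
    (∀ w₁ w₂ w₃ : W,
      τ w₂ w₃ - τ (w₁ * w₂) w₃ + τ w₁ (w₂ * w₃) - τ w₁ w₂ = 0) ∧
    (∀ w : W, τ 1 w = 0 ∧ τ w 1 = 0) ∧
    ((∀ t t' : W, cs.IsReflection t → cs.IsReflection t' → IsConj t t') →
      ¬ ∃ f : W → ℤ, ∀ w₁ w₂ : W, τ w₁ w₂ = f w₂ - f (w₁ * w₂) + f w₁) := by
  have hm := cs.length_mul_mod_two
  refine ⟨?_, ?_, ?_⟩
  · intro a b c
    have h1 := hm a b
    have h2 := hm b c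
    simp only [hτ, Nat.odd_iff]
    split_ifs <;> omega
  · intro w
    simp [hτ]
  · rintro - ⟨f, hf⟩
    obtain ⟨i⟩ := ‹Nonempty B›
    have h1 := hf 1 1
    have h2 := hf (cs.simple i) (cs.simple i)
    simp [hτ] at h1 h2
    omega
end
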